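/- arXiv:1103.5960 — 2 statements merged into one kernel-verified Lean document; each statement's English description precedes it below -/
import Mathlib

section
/- Let E, F, G be real constants with F² + E·G > 0 and Q(u,v) = -E·u² + 2·F·u·v + G·v². Suppose E < 0. Let c : [0,1] → ℝ² be a C¹ curve with continuous nowhere-vanishing derivative satisfying Q(c'(t)) ≤ 0 for all t, with c(0) = (x₀,y₀) and c(1) = (x₁,y₁). Then for every t ∈ [0,1], the second component (c(t)).2 lies in the closed interval [min(y₀,y₁), max(y₀,y₁)]. (This is the diamond-confinement step in Theorem 2, (iv) ⇒ (vi): every causal curve from p to q has its image contained in the slab S¹ × [y₀,y₁], so causal diamonds J⁺(p) ∩ J⁻(q) are contained in compact sets.) -/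
/-- The quadratic form of the flat Lorentzian metric `g = -E dx² + 2F dx dy + G dy²`. -/
def Qform (E F G : ℝ) (p : ℝ × ℝ) : ℝ :=
  -E * p.1 ^ 2 + 2 * F * p.1 * p.2 + G * p.2 ^ 2

/-- If `∂x` is spacelike, a nonzero causal vector is not horizontal. -/
theorem snd_ne_zero_of_Qform_nonpos {E F G : ℝ} (hE : E < 0) {p : ℝ × ℝ} (hp : p ≠ 0)
    (hQ : Qform E F G p ≤ 0) : p.2 ≠ 0 := by
  intro h2
  have h1 : p.1 ≠ 0 := fun h1 => hp (Prod.ext h1 h2)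
  have hpos : 0 < -E * p.1 ^ 2 := mul_pos (neg_pos.mpr hE) (by positivity)
  simp only [Qform, h2] at hQ
  linarith

/-- Diamond confinement (Theorem 2, (iv) ⇒ (vi)): if `E < 0`, every causal C¹ curve
with nowhere-vanishing derivative from `(x₀, y₀)` to `(x₁, y₁)` stays inside the slab
`S¹ × [min y₀ y₁, max y₀ y₁]`. -/
theorem stmt_8 (E F G : ℝ) (hLor : F ^ 2 + E * G > 0) (hE : E < 0)
    (c c' : ℝ → ℝ × ℝ) (x₀ y₀ x₁ y₁ : ℝ)
    (hderiv : ∀ t ∈ Set.Icc (0 : ℝ) 1, HasDerivAt c (c' t) t)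
    (hcont : ContinuousOn c' (Set.Icc (0 : ℝ) 1))
    (hne : ∀ t ∈ Set.Icc (0 : ℝ) 1, c' t ≠ 0)
    (hcausal : ∀ t ∈ Set.Icc (0 : ℝ) 1, Qform E F G (c' t) ≤ 0)
    (h0 : c 0 = (x₀, y₀)) (h1 : c 1 = (x₁, y₁)) :
    ∀ t ∈ Set.Icc (0 : ℝ) 1, (c t).2 ∈ Set.Icc (min y₀ y₁) (max y₀ y₁) := by
  intro t ht
  have hy : ∀ s ∈ Set.Icc (0 : ℝ) 1, HasDerivAt (fun r => (c r).2) (c' s).2 s :=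
    fun s hs => (hderiv s hs).snd
  have hy_cont : ContinuousOn (fun r => (c r).2) (Set.Icc (0 : ℝ) 1) :=
    fun s hs => (hy s hs).continuousAt.continuousWithinAt
  have hy_int : ∀ s ∈ interior (Set.Icc (0 : ℝ) 1), HasDerivWithinAt (fun r => (c r).2)
      (c' s).2 (interior (Set.Icc (0 : ℝ) 1)) s :=
    fun s hs => (hy s (interior_subset hs)).hasDerivWithinAt
  have hmem0 : (0 : ℝ) ∈ Set.Icc (0 : ℝ) 1 := by simp
  have hmem1 : (1 : ℝ) ∈ Set.Icc (0 : ℝ) 1 := by simp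
  have hy0 : (c 0).2 = y₀ := by rw [h0]
  have hy1 : (c 1).2 = y₁ := by rw [h1]
  rcases hasDerivWithinAt_forall_lt_or_forall_gt_of_forall_ne (convex_Icc (0 : ℝ) 1)
    (fun s hs => (hy s hs).hasDerivWithinAt)
    (fun s hs => snd_ne_zero_of_Qform_nonpos hE (hne s hs) (hcausal s hs)) with hneg | hpos
  · have hanti := antitoneOn_of_hasDerivWithinAt_nonpos (convex_Icc (0 : ℝ) 1) hy_cont hy_int
      (fun s hs => (hneg s (interior_subset hs)).le)
    have hle0 : (c t).2 ≤ (c 0).2 := hanti hmem0 ht ht.1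
    have hle1 : (c 1).2 ≤ (c t).2 := hanti ht hmem1 ht.2
    exact ⟨min_le_of_right_le (hy1 ▸ hle1), le_max_of_le_left (hy0 ▸ hle0)⟩
  · have hmono := monotoneOn_of_hasDerivWithinAt_nonneg (convex_Icc (0 : ℝ) 1) hy_cont hy_int
      (fun s hs => (hpos s (interior_subset hs)).le)
    have hle0 : (c 0).2 ≤ (c t).2 := hmono hmem0 ht ht.1
    have hle1 : (c t).2 ≤ (c 1).2 := hmono ht hmem1 ht.2
    exact ⟨min_le_of_left_le (hy0 ▸ hle0), le_max_of_le_right (hy1 ▸ hle1)⟩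
end

section
/- Let E, F, G be real constants with F² + E·G > 0 and Q(u,v) = -E·u² + 2·F·u·v + G·v². Consider the three conditions: (a) through every point of ℝ² there passes a C¹ curve c : [0,1] → ℝ² with Q(c'(t)) < 0 for all t and c(1) - c(0) = (n,0) for some integer n (totally vicious); (b) there exists a C¹ curve with continuous nowhere-vanishing derivative, Q(c'(t)) ≤ 0 for all t and c(1) - c(0) = (n,0) for some integer n, but no such curve with Q(c'(t)) < 0 for all t (chronological but non-causal); (c) there is no C¹ curve with continuous nowhere-vanishing derivative, Q(c'(t)) ≤ 0 for all t and c(1) - c(0) = (n,0) for some integer n (causal). Then exactly one of (a), (b), (c) holds, and (a) holds iff E > 0, (b) holds iff E = 0, (c) holds iff E < 0. (This is the concluding classification of the paper: a conformally flat Lorentzian cylinder spacetime occupies exactly one of three steps of the causal ladder — totally vicious, chronological but non-causal, or causal/globally hyperbolic — according to the causal character of ∂x.) -/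
/-- The flat Lorentzian cylinder admits a closed causal curve. -/
def ExistsClosedCausal (E F G : ℝ) : Prop :=
  ∃ c c' : ℝ → ℝ × ℝ,
    (∀ t ∈ Set.Icc (0 : ℝ) 1, HasDerivAt c (c' t) t) ∧
    ContinuousOn c' (Set.Icc (0 : ℝ) 1) ∧
    (∀ t ∈ Set.Icc (0 : ℝ) 1, c' t ≠ 0) ∧
    (∀ t ∈ Set.Icc (0 : ℝ) 1, Qform E F G (c' t) ≤ 0) ∧
    ∃ n : ℤ, c 1 - c 0 = ((n : ℝ), 0)

/-- The flat Lorentzian cylinder admits a closed timelike curve. -/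
def ExistsClosedTimelike (E F G : ℝ) : Prop :=
  ∃ c c' : ℝ → ℝ × ℝ,
    (∀ t ∈ Set.Icc (0 : ℝ) 1, HasDerivAt c (c' t) t) ∧
    ContinuousOn c' (Set.Icc (0 : ℝ) 1) ∧
    (∀ t ∈ Set.Icc (0 : ℝ) 1, Qform E F G (c' t) < 0) ∧
    ∃ n : ℤ, c 1 - c 0 = ((n : ℝ), 0)

/-- The flat Lorentzian cylinder is totally vicious: through every point there passes
a closed timelike curve. -/
def TotallyVicious (E F G : ℝ) : Prop :=
  ∀ x₀ y₀ : ℝ, ∃ c c' : ℝ → ℝ × ℝ,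
    c 0 = (x₀, y₀) ∧
    (∀ t ∈ Set.Icc (0 : ℝ) 1, HasDerivAt c (c' t) t) ∧
    ContinuousOn c' (Set.Icc (0 : ℝ) 1) ∧
    (∀ t ∈ Set.Icc (0 : ℝ) 1, Qform E F G (c' t) < 0) ∧
    ∃ n : ℤ, c 1 - c 0 = ((n : ℝ), 0)

/-- A curve closed on the cylinder has a horizontal velocity at some time. -/
lemma exists_snd_deriv_eq_zero {c c' : ℝ → ℝ × ℝ} {a : ℝ}
    (hc : ∀ t ∈ Set.Icc (0 : ℝ) 1, HasDerivAt c (c' t) t) (hclosed : c 1 - c 0 = (a, 0)) :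
    ∃ t ∈ Set.Icc (0 : ℝ) 1, (c' t).2 = 0 := by
  have hsnd : ∀ t ∈ Set.Icc (0 : ℝ) 1, HasDerivAt (fun s => (c s).2) (c' t).2 t :=
    fun t ht => (hc t ht).snd
  have hends : (c 0).2 = (c 1).2 := by
    have h := congrArg Prod.snd hclosed
    simp only [Prod.snd_sub] at h
    linarith
  obtain ⟨t, ht, h0⟩ := exists_hasDerivAt_eq_zero zero_lt_one
    (fun t ht => (hsnd t ht).continuousAt.continuousWithinAt) hends
    (fun t ht => hsnd t (Set.Ioo_subset_Icc_self ht))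
  exact ⟨t, Set.Ioo_subset_Icc_self ht, h0⟩

lemma hasDerivAt_horizontal (x₀ y₀ t : ℝ) :
    HasDerivAt (fun s : ℝ => (x₀ + s, y₀)) ((1 : ℝ), (0 : ℝ)) t :=
  ((hasDerivAt_id t).const_add x₀).prodMk (hasDerivAt_const t y₀)

lemma totallyVicious_of_pos {E : ℝ} (F G : ℝ) (hE : 0 < E) : TotallyVicious E F G := by
  intro x₀ y₀
  refine ⟨fun s => (x₀ + s, y₀), fun _ => (1, 0), by simp,
    fun t _ => hasDerivAt_horizontal x₀ y₀ t, continuousOn_const, ?_, 1, by simp⟩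
  intro t _
  simpa [Qform] using hE

lemma existsClosedCausal_of_nonneg {E : ℝ} (F G : ℝ) (hE : 0 ≤ E) :
    ExistsClosedCausal E F G := by
  refine ⟨fun s => (0 + s, 0), fun _ => (1, 0),
    fun t _ => hasDerivAt_horizontal 0 0 t, continuousOn_const, by simp, ?_, 1, by simp⟩
  intro t _
  simpa [Qform] using hE

lemma TotallyVicious.existsClosedTimelike {E F G : ℝ} (h : TotallyVicious E F G) :
    ExistsClosedTimelike E F G := by
  obtain ⟨c, c', -, hc⟩ := h 0 0
  exact ⟨c, c', hc⟩

lemma ExistsClosedTimelike.pos {E F G : ℝ} (h : ExistsClosedTimelike E F G) : 0 < E := by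
  obtain ⟨c, c', hc, -, hQ, n, hn⟩ := h
  obtain ⟨t, ht, h0⟩ := exists_snd_deriv_eq_zero hc hn
  have hlt := hQ t ht
  simp only [Qform, h0] at hlt
  by_contra hE
  nlinarith [sq_nonneg (c' t).1]

lemma ExistsClosedCausal.nonneg {E F G : ℝ} (h : ExistsClosedCausal E F G) : 0 ≤ E := by
  obtain ⟨c, c', hc, -, hne, hQ, n, hn⟩ := h
  obtain ⟨t, ht, h0⟩ := exists_snd_deriv_eq_zero hc hn
  have hle := hQ t ht
  simp only [Qform, h0] at hle
  have hfst : (c' t).1 ≠ 0 := fun h1 => hne t ht (Prod.ext h1 h0)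
  have hsq : 0 < (c' t).1 ^ 2 := by positivity
  by_contra hE
  nlinarith

/-- Causal classification of conformally flat Lorentzian cylinders: exactly one of
"totally vicious", "chronological but non-causal", "causal" holds, according as
`E > 0`, `E = 0`, `E < 0`. -/
theorem stmt_13 (E F G : ℝ) (hLor : F ^ 2 + E * G > 0) :
    ((TotallyVicious E F G ∧
        ¬ (ExistsClosedCausal E F G ∧ ¬ ExistsClosedTimelike E F G) ∧
        ¬ ¬ ExistsClosedCausal E F G) ∨
      (¬ TotallyVicious E F G ∧
        (ExistsClosedCausal E F G ∧ ¬ ExistsClosedTimelike E F G) ∧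
        ¬ ¬ ExistsClosedCausal E F G) ∨
      (¬ TotallyVicious E F G ∧
        ¬ (ExistsClosedCausal E F G ∧ ¬ ExistsClosedTimelike E F G) ∧
        ¬ ExistsClosedCausal E F G)) ∧
    (TotallyVicious E F G ↔ E > 0) ∧
    ((ExistsClosedCausal E F G ∧ ¬ ExistsClosedTimelike E F G) ↔ E = 0) ∧
    (¬ ExistsClosedCausal E F G ↔ E < 0) := by
  have hTV : TotallyVicious E F G ↔ E > 0 :=
    ⟨fun h => h.existsClosedTimelike.pos, totallyVicious_of_pos F G⟩
  have hCT : ExistsClosedTimelike E F G ↔ E > 0 :=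
    ⟨fun h => h.pos, fun h => (totallyVicious_of_pos F G h).existsClosedTimelike⟩
  have hCC : ExistsClosedCausal E F G ↔ 0 ≤ E :=
    ⟨fun h => h.nonneg, existsClosedCausal_of_nonneg F G⟩
  rw [hTV, hCT, hCC]
  grind
end
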